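/- Let f : ℝⁿ → ℝ be convex with nonempty solution set argmin f. Let t_k = 1/(k+1) and let δ_k > 0 satisfy Σ_{k=0}^∞ √(n t_k δ_k) < ∞, and assume the HJ-Prox integrals are finite at every iterate. Then the exact-integral HJ-Prox proximal point iteration x_{k+1} = prox^{δ_k}_{t_k f}(x_k) converges to a global minimizer of f. -/

import Mathlib

open MeasureTheory Real Filter Topology

/-- Existence of the proximal point together with its variational characterization. -/
lemma prox_exists_aux {n : ℕ} (f : EuclideanSpace ℝ (Fin n) → ℝ)
    (hf : ConvexOn ℝ Set.univ f)
    (ustar : EuclideanSpace ℝ (Fin n)) (hustar : ∀ z, f ustar ≤ f z)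
    (hcont : Continuous f)
    (t : ℝ) (ht : 0 < t) (x : EuclideanSpace ℝ (Fin n)) :
    ∃ p, ∀ u, f p + inner ℝ (x - p) (u - p) / t ≤ f u := by
  have hc : Continuous fun z => f z + ‖z - x‖ ^ 2 / (2 * t) := by fun_prop
  have hlim : Tendsto (fun z => f z + ‖z - x‖ ^ 2 / (2 * t)) (cocompact _) atTop := by
    apply tendsto_atTop_add_left_of_le _ (f ustar) hustar
    apply Tendsto.atTop_div_const (by positivity)
    apply (tendsto_pow_atTop (two_ne_zero)).comp
    have h1 := tendsto_norm_cocompact_atTop (E := EuclideanSpace ℝ (Fin n))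
    have h2 : Tendsto (fun z : EuclideanSpace ℝ (Fin n) => ‖z‖ + (-‖x‖)) (cocompact _) atTop :=
      tendsto_atTop_add_const_right _ _ h1
    refine tendsto_atTop_mono (fun z => ?_) h2
    have := norm_sub_norm_le z x
    linarith
  obtain ⟨p, hp⟩ := hc.exists_forall_le hlim
  refine ⟨p, fun u => ?_⟩
  have key : ∀ s : ℝ, s ∈ Set.Ioo (0:ℝ) 1 →
      f p + inner ℝ (x - p) (u - p) / t - f u ≤ s * (‖u - p‖ ^ 2 / (2 * t)) := by
    intro s hs
    have h1 := hp (p + s • (u - p))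
    have h2 := hf.2 (Set.mem_univ p) (Set.mem_univ u) (sub_nonneg.2 hs.2.le) hs.1.le (by ring)
    have e : (1 - s) • p + s • u = p + s • (u - p) := by module
    rw [e] at h2
    have h3 : ‖p + s • (u - p) - x‖ ^ 2 = ‖p - x‖ ^ 2 - 2 * s * inner ℝ (x - p) (u - p)
        + s ^ 2 * ‖u - p‖ ^ 2 := by
      have : p + s • (u - p) - x = (p - x) + s • (u - p) := by abel
      rw [this, norm_add_sq_real, norm_smul, inner_smul_right, mul_pow, Real.norm_eq_abs, sq_abs,
        ← neg_sub x p, inner_neg_left, norm_neg]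
      ring
    simp only [h3, smul_eq_mul] at h1 h2
    have h4 : (‖p - x‖ ^ 2 - 2 * s * inner ℝ (x - p) (u - p) + s ^ 2 * ‖u - p‖ ^ 2) / (2 * t)
        = ‖p - x‖ ^ 2 / (2 * t) - s * (inner ℝ (x - p) (u - p) / t)
          + s * (s * (‖u - p‖ ^ 2 / (2 * t))) := by
      field_simp
    rw [h4] at h1
    have : s * (f p + inner ℝ (x - p) (u - p) / t - f u) ≤ s * (s * (‖u - p‖ ^ 2 / (2 * t))) := by
      linarith
    exact le_of_mul_le_mul_left this hs.1
  have hl : Tendsto (fun s : ℝ => s * (‖u - p‖ ^ 2 / (2 * t))) (𝓝[>] 0) (𝓝 0) := by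
    have : Tendsto (fun s : ℝ => s * (‖u - p‖ ^ 2 / (2 * t))) (𝓝 0)
        (𝓝 (0 * (‖u - p‖ ^ 2 / (2 * t)))) := tendsto_id.mul_const _
    rw [zero_mul] at this
    exact this.mono_left nhdsWithin_le_nhds
  have := ge_of_tendsto hl (by
    filter_upwards [Ioo_mem_nhdsGT (zero_lt_one' ℝ)] with s hs using key s hs)
  linarith

/-- Distance between the HJ-Prox and the prox, with a (non sharp) dimensional constant. -/
lemma hj_bound_aux {n : ℕ} (f : EuclideanSpace ℝ (Fin n) → ℝ)
    (hf : ConvexOn ℝ Set.univ f)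
    (t δ : ℝ) (ht : 0 < t) (hδ : 0 < δ) (x p : EuclideanSpace ℝ (Fin n))
    (hp : ∀ u, f p + inner ℝ (x - p) (u - p) / t ≤ f u)
    (W : EuclideanSpace ℝ (Fin n) → ℝ)
    (hW : W = fun z => Real.exp (-(f z + ‖z - x‖ ^ 2 / (2 * t)) / δ))
    (hint1 : Integrable W) (hint2 : Integrable fun z => W z • z) :
    ‖(∫ z, W z)⁻¹ • (∫ z, W z • z) - p‖ ≤ (1 + 8 * 2 ^ n) * Real.sqrt (t * δ) := by
  set G : EuclideanSpace ℝ (Fin n) → ℝ := fun u => W (p + u) with hG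
  have hGpos : ∀ u, 0 < G u := fun u => by simp only [hG, hW]; positivity
  have hGi : Integrable G := hint1.comp_add_left p
  have hGui : Integrable fun u => G u • u := by
    have h1 : Integrable fun u => G u • (p + u) := hint2.comp_add_left p
    have h2 : Integrable fun u => G u • p := hGi.smul_const p
    refine (h1.sub h2).congr (Eventually.of_forall fun u => ?_)
    simp [smul_add]
  have hZ : ∫ z, W z = ∫ u, G u := (integral_add_left_eq_self W p).symm
  have hN : ∫ z, W z • z = (∫ u, G u) • p + ∫ u, G u • u := by
    rw [← integral_add_left_eq_self (fun z => W z • z) p, ← integral_smul_const,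
      ← integral_add (hGi.smul_const p) hGui]
    simp [hG, smul_add]
  have hZpos : 0 < ∫ u, G u := by
    rw [integral_pos_iff_support_of_nonneg (fun u => (hGpos u).le) hGi]
    have : Function.support G = Set.univ := by
      ext u; simp [(hGpos u).ne']
    rw [this]
    exact isOpen_univ.measure_pos volume Set.univ_nonempty
  -- pointwise inequality
  have hpt : ∀ u, G u * (1 + 3 / (8 * (t * δ)) * ‖u‖ ^ 2) ≤ G ((2⁻¹ : ℝ) • u) := by
    intro u
    have h1 := hf.2 (Set.mem_univ p) (Set.mem_univ (p + u)) (by norm_num : (0:ℝ) ≤ 2⁻¹)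
      (by norm_num : (0:ℝ) ≤ 2⁻¹) (by norm_num)
    have e : (2⁻¹ : ℝ) • p + (2⁻¹ : ℝ) • (p + u) = p + (2⁻¹ : ℝ) • u := by module
    rw [e] at h1
    have h2 := hp (p + u)
    rw [add_sub_cancel_left] at h2
    have q1 : ‖p + u - x‖ ^ 2 = ‖x - p‖ ^ 2 - 2 * inner ℝ (x - p) u + ‖u‖ ^ 2 := by
      have : p + u - x = -((x - p) - u) := by abel
      rw [this, norm_neg, norm_sub_sq_real]
    have q2 : ‖p + (2⁻¹ : ℝ) • u - x‖ ^ 2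
        = ‖x - p‖ ^ 2 - inner ℝ (x - p) u + ‖u‖ ^ 2 / 4 := by
      have : p + (2⁻¹ : ℝ) • u - x = -((x - p) - (2⁻¹ : ℝ) • u) := by abel
      rw [this, norm_neg, norm_sub_sq_real, inner_smul_right, norm_smul]
      norm_num
      ring
    simp only [hG, hW, q1, q2]
    have hA : 3 / (8 * (t * δ)) * ‖u‖ ^ 2 +
        -(f (p + u) + (‖x - p‖ ^ 2 - 2 * inner ℝ (x - p) u + ‖u‖ ^ 2) / (2 * t)) / δ ≤
        -(f (p + (2⁻¹ : ℝ) • u) +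
          (‖x - p‖ ^ 2 - inner ℝ (x - p) u + ‖u‖ ^ 2 / 4) / (2 * t)) / δ := by
      have e1 : 3 / (8 * (t * δ)) * ‖u‖ ^ 2 = (3 * ‖u‖ ^ 2 / (8 * t)) / δ := by field_simp
      rw [e1, ← add_div]
      apply div_le_div_of_nonneg_right _ hδ.le
      have e2 : (‖x - p‖ ^ 2 - 2 * inner ℝ (x - p) u + ‖u‖ ^ 2) / (2 * t)
        - (‖x - p‖ ^ 2 - inner ℝ (x - p) u + ‖u‖ ^ 2 / 4) / (2 * t)
        = 3 * ‖u‖ ^ 2 / (8 * t) - 2⁻¹ * (inner ℝ (x - p) u / t) := by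
        field_simp; ring
      simp only [smul_eq_mul] at h1
      linarith
    refine le_trans ?_ (Real.exp_le_exp.2 hA)
    rw [Real.exp_add, mul_comm]
    apply mul_le_mul_of_nonneg_right _ (Real.exp_pos _).le
    have := Real.add_one_le_exp (3 / (8 * (t * δ)) * ‖u‖ ^ 2)
    linarith
  have htd : 0 < t * δ := by positivity
  set a := Real.sqrt (t * δ) with ha
  have hapos : 0 < a := Real.sqrt_pos.2 htd
  have hasq : a ^ 2 = t * δ := Real.sq_sqrt htd.le
  have hhalf : ∫ u, G ((2⁻¹ : ℝ) • u) = 2 ^ n * ∫ u, G u := by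
    rw [Measure.integral_comp_smul]
    simp
  have hhalfi : Integrable fun u => G ((2⁻¹ : ℝ) • u) := hGi.comp_smul (by norm_num)
  have hnorm : ‖∫ u, G u • u‖ ≤ (1 + 8 * 2 ^ n) * a * ∫ u, G u := by
    calc ‖∫ u, G u • u‖ ≤ ∫ u, (a * G u + (8 * a) * G ((2⁻¹ : ℝ) • u)) := by
          refine norm_integral_le_of_norm_le ((hGi.const_mul a).add (hhalfi.const_mul (8 * a)))
            (Eventually.of_forall fun u => ?_)
          rw [norm_smul, Real.norm_eq_abs, abs_of_pos (hGpos u)]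
          have h1 := hpt u
          have h2 : ‖u‖ ≤ a + 8 * a * (3 / (8 * (t * δ)) * ‖u‖ ^ 2) := by
            rw [← hasq]
            have : 8 * a * (3 / (8 * a ^ 2) * ‖u‖ ^ 2) = 3 * ‖u‖ ^ 2 / a := by
              field_simp
            rw [this, ← sub_le_iff_le_add', le_div_iff₀ hapos]
            nlinarith [sq_nonneg (‖u‖ - a), sq_nonneg ‖u‖, sq_nonneg a]
          have h3 := mul_le_mul_of_nonneg_left h2 (hGpos u).le
          have h4 := mul_le_mul_of_nonneg_left h1 (by positivity : 0 ≤ 8 * a)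
          have h5 : 0 < 8 * a * G u := mul_pos (by positivity) (hGpos u)
          nlinarith
      _ = (1 + 8 * 2 ^ n) * a * ∫ u, G u := by
          rw [integral_add (hGi.const_mul a) (hhalfi.const_mul (8 * a)),
            integral_const_mul, integral_const_mul, hhalf]
          ring
  have hfin : (∫ z, W z)⁻¹ • (∫ z, W z • z) - p = (∫ u, G u)⁻¹ • ∫ u, G u • u := by
    rw [hZ, hN, smul_add, smul_smul, inv_mul_cancel₀ hZpos.ne', one_smul, add_sub_cancel_left]
  rw [hfin, norm_smul, norm_inv, Real.norm_eq_abs, abs_of_pos hZpos, inv_mul_le_iff₀ hZpos]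
  linarith

/-- Quasi-Fejér real sequences converge. -/
lemma quasi_fejer_aux (a ε : ℕ → ℝ) (ha : ∀ k, 0 ≤ a k) (hε : ∀ k, 0 ≤ ε k)
    (hs : Summable ε) (h : ∀ k, a (k + 1) ≤ a k + ε k) : ∃ L, Tendsto a atTop (𝓝 L) := by
  have hanti : Antitone fun k => a k - ∑ i ∈ Finset.range k, ε i := by
    apply antitone_nat_of_succ_le
    intro k
    rw [Finset.sum_range_succ]
    linarith [h k]
  have hb : BddBelow (Set.range fun k => a k - ∑ i ∈ Finset.range k, ε i) := by
    refine ⟨-∑' i, ε i, ?_⟩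
    rintro _ ⟨k, rfl⟩
    have := hs.sum_le_tsum (Finset.range k) (fun i _ => hε i)
    have := ha k
    simp only
    linarith
  have h1 := tendsto_atTop_ciInf hanti hb
  have h2 := h1.add hs.hasSum.tendsto_sum_nat
  exact ⟨_, by simpa using h2⟩

/-- **Convergence of the exact-integral HJ-Prox proximal point method.** With step
sizes `t_k = 1/(k+1)` and smoothing parameters `δ_k > 0` satisfying
`Σ √(n t_k δ_k) < ∞`, the iteration `x_{k+1} = prox^{δ_k}_{t_k f}(x_k)` (with
exactly evaluated integrals) converges to a global minimizer of `f`. -/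
theorem hj_ppm_convergence (n : ℕ) (f : EuclideanSpace ℝ (Fin n) → ℝ)
    (hf : ConvexOn ℝ Set.univ f)
    (ustar : EuclideanSpace ℝ (Fin n)) (hustar : ∀ z, f ustar ≤ f z)
    (t δ : ℕ → ℝ) (htdef : ∀ k : ℕ, t k = 1 / ((k : ℝ) + 1))
    (hδpos : ∀ k, 0 < δ k)
    (hsum : Summable fun k => Real.sqrt (n * t k * δ k))
    (x : ℕ → EuclideanSpace ℝ (Fin n))
    (hint1 : ∀ k : ℕ, Integrable (fun z : EuclideanSpace ℝ (Fin n) =>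
      Real.exp (-(f z + ‖z - x k‖ ^ 2 / (2 * t k)) / δ k)))
    (hint2 : ∀ k : ℕ, Integrable (fun z : EuclideanSpace ℝ (Fin n) =>
      Real.exp (-(f z + ‖z - x k‖ ^ 2 / (2 * t k)) / δ k) • z))
    (hx : ∀ k : ℕ, x (k + 1) =
      (∫ z : EuclideanSpace ℝ (Fin n),
          Real.exp (-(f z + ‖z - x k‖ ^ 2 / (2 * t k)) / δ k))⁻¹ •
        ∫ z : EuclideanSpace ℝ (Fin n),
          Real.exp (-(f z + ‖z - x k‖ ^ 2 / (2 * t k)) / δ k) • z) :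
    ∃ xstar : EuclideanSpace ℝ (Fin n),
      (∀ z, f xstar ≤ f z) ∧ Tendsto x atTop (𝓝 xstar) := by
  rcases Nat.eq_zero_or_pos n with hn | hn
  · subst hn
    refine ⟨ustar, hustar, ?_⟩
    have : x = fun _ => ustar := by
      funext k
      exact Subsingleton.elim _ _
    rw [this]
    exact tendsto_const_nhds
  have hcont : Continuous f := by
    rw [← continuousOn_univ]
    exact hf.continuousOn isOpen_univ
  have ht : ∀ k, 0 < t k := fun k => by rw [htdef]; positivity
  choose p hp using fun k => prox_exists_aux f hf ustar hustar hcont (t k) (ht k) (x k)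
  set ε : ℕ → ℝ := fun k => (1 + 8 * 2 ^ n) * Real.sqrt (t k * δ k) with hε
  have hε0 : ∀ k, 0 ≤ ε k := fun k => by positivity
  have hεs : Summable ε := by
    apply Summable.mul_left
    refine Summable.of_nonneg_of_le (fun k => Real.sqrt_nonneg _) (fun k => ?_) hsum
    apply Real.sqrt_le_sqrt
    have h1 : (1:ℝ) ≤ n := by exact_mod_cast hn
    have h2 : 0 < t k * δ k := mul_pos (ht k) (hδpos k)
    nlinarith
  have herr : ∀ k, ‖x (k + 1) - p k‖ ≤ ε k := by
    intro k
    rw [hx k]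
    exact hj_bound_aux f hf (t k) (δ k) (ht k) (hδpos k) (x k) (p k) (hp k) _ rfl
      (hint1 k) (hint2 k)
  -- Fejér inequality
  have hfej : ∀ u k, ‖p k - u‖ ^ 2 + 2 * t k * (f (p k) - f u) ≤ ‖x k - u‖ ^ 2 := by
    intro u k
    have h1 := hp k u
    have h2 : ‖x k - u‖ ^ 2 = ‖x k - p k‖ ^ 2 - 2 * inner ℝ (x k - p k) (u - p k)
        + ‖p k - u‖ ^ 2 := by
      have : x k - u = (x k - p k) - (u - p k) := by abel
      rw [this, norm_sub_sq_real, norm_sub_rev u]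
    have h3 : t k * (f (p k) - f u) ≤ - inner ℝ (x k - p k) (u - p k) := by
      have h4 : inner ℝ (x k - p k) (u - p k) / t k ≤ f u - f (p k) := by linarith
      rw [div_le_iff₀ (ht k)] at h4
      linarith
    nlinarith [sq_nonneg ‖x k - p k‖]
  have hpu : ∀ u, (∀ z, f u ≤ f z) → ∀ k, ‖p k - u‖ ≤ ‖x k - u‖ := by
    intro u hu k
    have h1 := hfej u k
    have h2 : 0 ≤ 2 * t k * (f (p k) - f u) :=
      mul_nonneg (by linarith [ht k]) (by linarith [hu (p k)])
    exact (fun h h0 => abs_le_of_sq_le_sq' h h0 |>.2) (by linarith) (norm_nonneg _)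
  have hstep0 : ∀ u k, ‖x (k + 1) - u‖ ≤ ‖p k - u‖ + ε k := by
    intro u k
    have : x (k + 1) - u = (p k - u) + (x (k + 1) - p k) := by abel
    rw [this]
    exact (norm_add_le _ _).trans (by linarith [herr k])
  have hconv : ∀ u, (∀ z, f u ≤ f z) → ∃ L, Tendsto (fun k => ‖x k - u‖) atTop (𝓝 L) := by
    intro u hu
    refine quasi_fejer_aux _ ε (fun k => norm_nonneg _) hε0 hεs (fun k => ?_)
    linarith [hstep0 u k, hpu u hu k]
  obtain ⟨L, hL⟩ := hconv ustar hustar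
  obtain ⟨M, hM⟩ := hL.bddAbove_range
  have hM' : ∀ k, ‖x k - ustar‖ ≤ M := fun k => hM ⟨k, rfl⟩
  obtain ⟨E, hE⟩ := hεs.tendsto_atTop_zero.bddAbove_range
  have hE' : ∀ k, ε k ≤ E := fun k => hE ⟨k, rfl⟩
  have hgap : ∀ k, 0 ≤ f (p k) - f ustar := fun k => by linarith [hustar (p k)]
  -- summability of the weighted gaps
  have hsumgap : Summable fun k => t k * (f (p k) - f ustar) := by
    have hbd : ∀ k, 2 * (t k * (f (p k) - f ustar)) ≤
        ‖x k - ustar‖ ^ 2 - ‖x (k + 1) - ustar‖ ^ 2 + (2 * M + E) * ε k := by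
      intro k
      have h1 := hfej ustar k
      have h2 := hstep0 ustar k
      have h3 := hpu ustar hustar k
      have h4 : ‖x (k + 1) - ustar‖ ^ 2 ≤ (‖p k - ustar‖ + ε k) ^ 2 :=
        pow_le_pow_left₀ (norm_nonneg _) h2 2
      have h5 : ε k * ‖p k - ustar‖ ≤ ε k * M :=
        mul_le_mul_of_nonneg_left (h3.trans (hM' k)) (hε0 k)
      have h6 : ε k * ε k ≤ ε k * E := mul_le_mul_of_nonneg_left (hE' k) (hε0 k)
      nlinarith
    have hME : 0 ≤ 2 * M + E := by
      linarith [(norm_nonneg _).trans (hM' 0), (hε0 0).trans (hE' 0)]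
    refine summable_of_sum_range_le (c := (‖x 0 - ustar‖ ^ 2 + (2 * M + E) * ∑' i, ε i) / 2)
      (fun k => mul_nonneg (ht k).le (hgap k)) (fun N => ?_)
    have h1 : ∑ k ∈ Finset.range N, 2 * (t k * (f (p k) - f ustar)) ≤
        ∑ k ∈ Finset.range N,
          (‖x k - ustar‖ ^ 2 - ‖x (k + 1) - ustar‖ ^ 2 + (2 * M + E) * ε k) :=
      Finset.sum_le_sum fun k _ => hbd k
    rw [Finset.sum_add_distrib, Finset.sum_range_sub' (fun k => ‖x k - ustar‖ ^ 2),
      ← Finset.mul_sum, ← Finset.mul_sum] at h1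
    have h2 := mul_le_mul_of_nonneg_left
      (hεs.sum_le_tsum (Finset.range N) (fun i _ => hε0 i)) hME
    have h3 := sq_nonneg ‖x N - ustar‖
    linarith
  have hfreq : ∀ m : ℕ, ∃ᶠ k in atTop, f (p k) - f ustar < 1 / ((m : ℝ) + 1) := by
    intro m
    by_contra hcon
    rw [not_frequently] at hcon
    obtain ⟨N, hN⟩ := eventually_atTop.1 hcon
    have hmpos : (0:ℝ) < 1 / ((m : ℝ) + 1) := by positivity
    have h1 : Summable fun k => t (k + N) * (1 / ((m : ℝ) + 1)) := by
      refine Summable.of_nonneg_of_le (fun k => mul_nonneg (ht _).le hmpos.le) (fun k => ?_)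
        ((summable_nat_add_iff N).2 hsumgap)
      exact mul_le_mul_of_nonneg_left (not_lt.1 (hN (k + N) (Nat.le_add_left _ _))) (ht _).le
    have h2 : Summable t := by
      rw [← summable_nat_add_iff N]
      exact (summable_mul_right_iff hmpos.ne').1 h1
    have h3 : Summable fun k : ℕ => 1 / ((k : ℝ)) := by
      rw [← summable_nat_add_iff 1]
      refine h2.congr (fun k => ?_)
      rw [htdef]; push_cast; rfl
    exact Real.not_summable_one_div_natCast h3
  obtain ⟨φ, hφ, hφgap⟩ := extraction_forall_of_frequently hfreq
  obtain ⟨xstar, -, ψ, hψ, hlim⟩ := tendsto_subseq_of_bounded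
    (Metric.isBounded_closedBall (x := ustar) (r := M)) (x := fun m => p (φ m)) (fun m => by
      rw [Metric.mem_closedBall, dist_eq_norm]
      exact (hpu ustar hustar _).trans (hM' _))
  have hφψ : Tendsto (fun m => φ (ψ m)) atTop atTop :=
    hφ.tendsto_atTop.comp hψ.tendsto_atTop
  have hxs : ∀ z, f xstar ≤ f z := by
    intro z
    refine le_trans ?_ (hustar z)
    have h1 : Tendsto (fun m => f (p (φ (ψ m)))) atTop (𝓝 (f xstar)) :=
      (hcont.tendsto xstar).comp hlim
    have h2 : Tendsto (fun m => f ustar + 1 / (((ψ m : ℕ) : ℝ) + 1)) atTop (𝓝 (f ustar + 0)) :=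
      tendsto_const_nhds.add (tendsto_one_div_add_atTop_nhds_zero_nat.comp hψ.tendsto_atTop)
    rw [add_zero] at h2
    exact le_of_tendsto_of_tendsto' h1 h2 (fun m => by linarith [hφgap (ψ m)])
  refine ⟨xstar, hxs, ?_⟩
  obtain ⟨L', hL'⟩ := hconv xstar hxs
  have hsub : Tendsto (fun m => ‖x (φ (ψ m) + 1) - xstar‖) atTop (𝓝 0) := by
    have h1 : Tendsto (fun m => ‖p (φ (ψ m)) - xstar‖ + ε (φ (ψ m))) atTop (𝓝 (0 + 0)) :=
      (tendsto_iff_norm_sub_tendsto_zero.1 hlim).add (hεs.tendsto_atTop_zero.comp hφψ)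
    rw [add_zero] at h1
    exact squeeze_zero (fun _ => norm_nonneg _) (fun m => hstep0 xstar _) h1
  have hsub' : Tendsto (fun m => ‖x (φ (ψ m) + 1) - xstar‖) atTop (𝓝 L') :=
    ((tendsto_add_atTop_iff_nat 1).2 hL').comp hφψ
  have : L' = 0 := tendsto_nhds_unique hsub' hsub
  rw [this] at hL'
  exact tendsto_iff_norm_sub_tendsto_zero.2 hL'
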